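/- Let α ∈ (0,1) and R = {(r_m, ρ_m)}_{m≥1} ∈ MP^ℕ. Then for every m ≥ 1, every u : V_m → ℝ and all x, y ∈ V_m, one has |u(x) − u(y)|² ≤ 4 E_{R,m}(u,u). -/

import Mathlib

/-!
The bound rests on three facts about the energies, none of which uses the geometry of the plane
beyond `G i (p i) = p i`.

* Self-similarity: splitting a word after its first letter gives
  `E_{m+1}(u) = r₁⁻¹ ∑ i, E'_m (u ∘ G i) + ρ₁⁻¹ Q₁ᴵ(u)`, where `E'` belongs to the shifted sequence
  of matching pairs. The recursion is taken as the definition of `energy`, and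
  `energy_eq` identifies it with the closed formula.
* Compatibility: for a matching pair, `Q₀(u) ≤ r⁻¹ ∑ i, Q₀(u ∘ G i) + ρ⁻¹ Q₁ᴵ(u)` (`tri_le_step`),
  hence `Q₀ ≤ E_m` and any two corners are at effective resistance at most `2/3` for `E_m`.
* The energies decrease when a function is cut into its parts above and below a level
  (`energy_cut`), so effective resistance satisfies the triangle inequality
  (`resistance_triangle`).

Let `x = G i x'` be a point of level `m + 1`. If every point of level `m` is at resistance at most
`5/3` from every corner, then self-similarity puts `x` at resistance at most `(5/3) r₁ ≤ 1` from
the corner `p i`, and so at most `1 + 2/3 = 5/3` from any corner, which closes the induction. For two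
points the triangle inequality through `p i` gives `1 + 5/3 = 8/3 ≤ 4`.
-/

/-- The energy `Q₀` of `u` on the triangle with corners `p 0, p 1, p 2`. -/
def triEnergy {X : Type*} (p : Fin 3 → X) (u : X → ℝ) : ℝ :=
  (u (p 0) - u (p 1)) ^ 2 + (u (p 1) - u (p 2)) ^ 2 + (u (p 2) - u (p 0)) ^ 2

/-- The energy `Q₁ᴵ` of `u` on the three segments joining the cells of level one. -/
def linkEnergy {X : Type*} (p : Fin 3 → X) (G : Fin 3 → X → X) (u : X → ℝ) : ℝ :=
  (u (G 0 (p 1)) - u (G 1 (p 0))) ^ 2 + (u (G 1 (p 2)) - u (G 2 (p 1))) ^ 2 +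
    (u (G 2 (p 0)) - u (G 0 (p 2))) ^ 2

/-- The energy of level `m` in its self-similar form. Each step consumes the first pair of the
sequence, so `r 0, ρ 0` are the pair of the coarsest level. -/
noncomputable def energy {X : Type*} (p : Fin 3 → X) (G : Fin 3 → X → X) :
    ℕ → (ℕ → ℝ) → (ℕ → ℝ) → (X → ℝ) → ℝ
  | 0, _, _, u => triEnergy p u
  | m + 1, r, ρ, u =>
    (r 0)⁻¹ * ∑ i, energy p G m (fun k => r (k + 1)) (fun k => ρ (k + 1)) (u ∘ G i) +
      (ρ 0)⁻¹ * linkEnergy p G u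

/-- Sequences of matching pairs. -/
def IsMatching (r ρ : ℕ → ℝ) : Prop :=
  ∀ m, 0 < r m ∧ 0 < ρ m ∧ (5 / 3) * r m + ρ m = 1

theorem IsMatching.shift {r ρ : ℕ → ℝ} (h : IsMatching r ρ) :
    IsMatching (fun k => r (k + 1)) (fun k => ρ (k + 1)) := fun m => h (m + 1)

theorem triEnergy_nonneg {X : Type*} (p : Fin 3 → X) (u : X → ℝ) : 0 ≤ triEnergy p u := by
  unfold triEnergy; positivity

theorem linkEnergy_nonneg {X : Type*} (p : Fin 3 → X) (G : Fin 3 → X → X) (u : X → ℝ) :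
    0 ≤ linkEnergy p G u := by
  unfold linkEnergy; positivity

theorem energy_nonneg {X : Type*} (p : Fin 3 → X) (G : Fin 3 → X → X) (m : ℕ) :
    ∀ (r ρ : ℕ → ℝ), IsMatching r ρ → ∀ u : X → ℝ, 0 ≤ energy p G m r ρ u := by
  induction m with
  | zero => intro r ρ _ u; exact triEnergy_nonneg p u
  | succ m ih =>
    intro r ρ h u
    have h0 := h 0
    exact add_nonneg
      (mul_nonneg (inv_nonneg.2 h0.1.le) (Finset.sum_nonneg fun i _ => ih _ _ h.shift _))
      (mul_nonneg (inv_nonneg.2 h0.2.1.le) (linkEnergy_nonneg p G u))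

/-! ### Cutting at a level -/

theorem sq_cut (s t c : ℝ) :
    (max s c - max t c) ^ 2 + (min s c - min t c) ^ 2 ≤ (s - t) ^ 2 := by
  rcases le_total s c with hs | hs <;> rcases le_total t c with ht | ht <;>
    simp only [max_eq_left, max_eq_right, min_eq_left, min_eq_right, hs, ht] <;>
    nlinarith [mul_nonneg (sub_nonneg.2 hs) (sub_nonneg.2 ht)]

theorem triEnergy_cut {X : Type*} (p : Fin 3 → X) (u : X → ℝ) (c : ℝ) :
    triEnergy p (fun x => max (u x) c) + triEnergy p (fun x => min (u x) c) ≤ triEnergy p u := by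
  unfold triEnergy
  linarith [sq_cut (u (p 0)) (u (p 1)) c, sq_cut (u (p 1)) (u (p 2)) c,
    sq_cut (u (p 2)) (u (p 0)) c]

theorem linkEnergy_cut {X : Type*} (p : Fin 3 → X) (G : Fin 3 → X → X) (u : X → ℝ) (c : ℝ) :
    linkEnergy p G (fun x => max (u x) c) + linkEnergy p G (fun x => min (u x) c) ≤
      linkEnergy p G u := by
  unfold linkEnergy
  linarith [sq_cut (u (G 0 (p 1))) (u (G 1 (p 0))) c, sq_cut (u (G 1 (p 2))) (u (G 2 (p 1))) c,
    sq_cut (u (G 2 (p 0))) (u (G 0 (p 2))) c]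

theorem energy_cut {X : Type*} (p : Fin 3 → X) (G : Fin 3 → X → X) (m : ℕ) :
    ∀ (r ρ : ℕ → ℝ), IsMatching r ρ → ∀ (u : X → ℝ) (c : ℝ),
      energy p G m r ρ (fun x => max (u x) c) + energy p G m r ρ (fun x => min (u x) c) ≤
        energy p G m r ρ u := by
  induction m with
  | zero => intro r ρ _ u c; exact triEnergy_cut p u c
  | succ m ih =>
    intro r ρ h u c
    have h0 := h 0
    have h1 := mul_le_mul_of_nonneg_left
      (Finset.sum_le_sum fun i (_ : i ∈ Finset.univ) => ih _ _ h.shift (u ∘ G i) c)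
      (inv_nonneg.2 h0.1.le)
    have h2 := mul_le_mul_of_nonneg_left (linkEnergy_cut p G u c) (inv_nonneg.2 h0.2.1.le)
    rw [Finset.sum_add_distrib] at h1
    simp only [energy, Function.comp_def] at h1 ⊢
    linarith

/-- Triangle inequality for effective resistance: cut `u` at the level `u y` and apply the two
bounds to the two parts, whose energies add up to at most the energy of `u`. -/
theorem resistance_triangle {X : Type*} (F : (X → ℝ) → ℝ) (hF : ∀ u, 0 ≤ F u)
    (hcut : ∀ u c, F (fun x => max (u x) c) + F (fun x => min (u x) c) ≤ F u)
    {x y z : X} {a b : ℝ} (ha : 0 < a) (hb : 0 < b)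
    (hxy : ∀ u : X → ℝ, (u x - u y) ^ 2 ≤ a * F u)
    (hyz : ∀ u : X → ℝ, (u y - u z) ^ 2 ≤ b * F u) (u : X → ℝ) :
    (u x - u z) ^ 2 ≤ (a + b) * F u := by
  -- Cauchy–Schwarz in the form needed for `u y` between the two other values.
  have key : ∀ s t A B : ℝ, s ^ 2 ≤ a * A → t ^ 2 ≤ b * B → A + B ≤ F u →
      (s + t) ^ 2 ≤ (a + b) * F u := by
    intro s t A B hs ht hAB
    have h1 : (s + t) ^ 2 ≤ (a + b) * (s ^ 2 / a + t ^ 2 / b) := by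
      have : (a + b) * (s ^ 2 / a + t ^ 2 / b) - (s + t) ^ 2 = (b * s - a * t) ^ 2 / (a * b) := by
        field_simp; ring
      have : 0 ≤ (b * s - a * t) ^ 2 / (a * b) := by positivity
      linarith
    have h2 : s ^ 2 / a ≤ A := by rw [div_le_iff₀ ha]; linarith
    have h3 : t ^ 2 / b ≤ B := by rw [div_le_iff₀ hb]; linarith
    exact h1.trans (mul_le_mul_of_nonneg_left (by linarith) (by positivity))
  have hx := hxy u
  have hz := hyz u
  have hx1 := hxy (fun q => max (u q) (u y))
  have hx2 := hxy (fun q => min (u q) (u y))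
  have hz1 := hyz (fun q => max (u q) (u y))
  have hz2 := hyz (fun q => min (u q) (u y))
  have hc := hcut u (u y)
  have haF := mul_nonneg ha.le (hF u)
  have hbF := mul_nonneg hb.le (hF u)
  rcases le_total (u x) (u y) with h1 | h1 <;> rcases le_total (u z) (u y) with h2 | h2 <;>
    simp only [max_eq_left, max_eq_right, min_eq_left, min_eq_right, h1, h2, max_self,
      min_self] at hx1 hx2 hz1 hz2
  · -- Outside the intermediate case one of the two differences dominates `u x - u z`.
    rcases le_total (u x) (u z) with h3 | h3 <;> nlinarith
  · have := key _ _ _ _ hx2 hz1 (by linarith)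
    simpa using this
  · have := key _ _ _ _ hx1 hz2 (by linarith)
    simpa using this
  · rcases le_total (u x) (u z) with h3 | h3 <;> nlinarith

/-! ### Compatibility of consecutive levels -/

/-- Weighted Cauchy–Schwarz along the path of three edges joining two corners. The weights add up
to `1` because the pair is matching. -/
theorem sq_add_le_of_matching {r ρ : ℝ} (hr : 0 < r) (hρ : 0 < ρ) (h : (5 / 3) * r + ρ = 1)
    (s t : ℝ) : (s + t) ^ 2 ≤ r⁻¹ * ((3 / 5) * s ^ 2) + ρ⁻¹ * t ^ 2 := by
  have hρ' : ρ = 1 - (5 / 3) * r := by linarith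
  have : r⁻¹ * ((3 / 5) * s ^ 2) + ρ⁻¹ * t ^ 2 - (s + t) ^ 2 =
      (3 / 5) * (ρ * s - (5 / 3) * r * t) ^ 2 / (r * ρ) := by
    rw [eq_div_iff (by positivity)]
    field_simp
    rw [hρ']
    ring
  have : 0 ≤ (3 / 5) * (ρ * s - (5 / 3) * r * t) ^ 2 / (r * ρ) := by positivity
  linarith

/-- The part of the compatibility inequality that concerns the three small triangles. The constant
`3/5` is optimal, with equality for harmonic functions. -/
theorem three_triangles (a0 a1 a2 b01 b02 b10 b12 b20 b21 : ℝ) :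
    (3 / 5) * (((a0 - b01) + (b10 - a1)) ^ 2 + ((a1 - b12) + (b21 - a2)) ^ 2 +
      ((a2 - b20) + (b02 - a0)) ^ 2) ≤
    ((a0 - b01) ^ 2 + (b01 - b02) ^ 2 + (b02 - a0) ^ 2) +
    ((b10 - a1) ^ 2 + (a1 - b12) ^ 2 + (b12 - b10) ^ 2) +
    ((b20 - b21) ^ 2 + (b21 - a2) ^ 2 + (a2 - b20) ^ 2) := by
  -- In each cell split the two drops from the corner into their mean `t` and half-difference `s`.
  obtain ⟨t0, ht0⟩ : ∃ t, t = ((a0 - b01) + (a0 - b02)) / 2 := ⟨_, rfl⟩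
  obtain ⟨s0, hs0⟩ : ∃ s, s = ((a0 - b01) - (a0 - b02)) / 2 := ⟨_, rfl⟩
  obtain ⟨t1, ht1⟩ : ∃ t, t = ((a1 - b12) + (a1 - b10)) / 2 := ⟨_, rfl⟩
  obtain ⟨s1, hs1⟩ : ∃ s, s = ((a1 - b12) - (a1 - b10)) / 2 := ⟨_, rfl⟩
  obtain ⟨t2, ht2⟩ : ∃ t, t = ((a2 - b20) + (a2 - b21)) / 2 := ⟨_, rfl⟩
  obtain ⟨s2, hs2⟩ : ∃ s, s = ((a2 - b20) - (a2 - b21)) / 2 := ⟨_, rfl⟩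
  have e1 : b01 = a0 - t0 - s0 := by linarith
  have e2 : b02 = a0 - t0 + s0 := by linarith
  have e3 : b12 = a1 - t1 - s1 := by linarith
  have e4 : b10 = a1 - t1 + s1 := by linarith
  have e5 : b20 = a2 - t2 - s2 := by linarith
  have e6 : b21 = a2 - t2 + s2 := by linarith
  rw [e1, e2, e3, e4, e5, e6]
  -- The difference of the two sides is `1/5`, `1/5`, `1/5`, `2/5`, `6/5` times these squares.
  linarith [sq_nonneg (t0 + t1 + 3 * s0 - 3 * s1), sq_nonneg (t1 + t2 + 3 * s1 - 3 * s2),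
    sq_nonneg (t2 + t0 + 3 * s2 - 3 * s0), sq_nonneg (t0 + t1 + t2), sq_nonneg (s0 + s1 + s2)]

theorem tri_le_step {X : Type*} {p : Fin 3 → X} {G : Fin 3 → X → X} (hfix : ∀ i, G i (p i) = p i)
    {r ρ : ℝ} (hr : 0 < r) (hρ : 0 < ρ) (h : (5 / 3) * r + ρ = 1) (u : X → ℝ) :
    triEnergy p u ≤ r⁻¹ * ∑ i, triEnergy p (u ∘ G i) + ρ⁻¹ * linkEnergy p G u := by
  have h01 := sq_add_le_of_matching hr hρ h
    ((u (p 0) - u (G 0 (p 1))) + (u (G 1 (p 0)) - u (p 1))) (u (G 0 (p 1)) - u (G 1 (p 0)))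
  have h12 := sq_add_le_of_matching hr hρ h
    ((u (p 1) - u (G 1 (p 2))) + (u (G 2 (p 1)) - u (p 2))) (u (G 1 (p 2)) - u (G 2 (p 1)))
  have h20 := sq_add_le_of_matching hr hρ h
    ((u (p 2) - u (G 2 (p 0))) + (u (G 0 (p 2)) - u (p 0))) (u (G 2 (p 0)) - u (G 0 (p 2)))
  have ht := mul_le_mul_of_nonneg_left (three_triangles (u (p 0)) (u (p 1)) (u (p 2))
    (u (G 0 (p 1))) (u (G 0 (p 2))) (u (G 1 (p 0))) (u (G 1 (p 2))) (u (G 2 (p 0)))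
    (u (G 2 (p 1)))) (inv_nonneg.2 hr.le)
  simp only [triEnergy, linkEnergy, Fin.sum_univ_three, Function.comp_apply, hfix]
  ring_nf at h01 h12 h20 ht ⊢
  linarith

theorem tri_le_energy {X : Type*} {p : Fin 3 → X} {G : Fin 3 → X → X}
    (hfix : ∀ i, G i (p i) = p i) (m : ℕ) :
    ∀ (r ρ : ℕ → ℝ), IsMatching r ρ → ∀ u : X → ℝ, triEnergy p u ≤ energy p G m r ρ u := by
  induction m with
  | zero => intro r ρ _ u; exact le_rfl
  | succ m ih =>
    intro r ρ h u
    obtain ⟨h1, h2, h3⟩ := h 0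
    refine (tri_le_step hfix h1 h2 h3 u).trans ?_
    have := mul_le_mul_of_nonneg_left
      (Finset.sum_le_sum fun i (_ : i ∈ Finset.univ) => ih _ _ h.shift (u ∘ G i))
      (inv_nonneg.2 h1.le)
    simp only [energy]
    linarith

/-! ### Resistance bounds -/

theorem corner_bound {X : Type*} (p : Fin 3 → X) (i j : Fin 3) (u : X → ℝ) :
    (u (p i) - u (p j)) ^ 2 ≤ (2 / 3) * triEnergy p u := by
  unfold triEnergy
  fin_cases i <;> fin_cases j <;> simp <;>
    nlinarith [sq_nonneg (u (p 0) + u (p 1) - 2 * u (p 2)),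
      sq_nonneg (u (p 1) + u (p 2) - 2 * u (p 0)), sq_nonneg (u (p 2) + u (p 0) - 2 * u (p 1)),
      sq_nonneg (u (p 0) - u (p 1)), sq_nonneg (u (p 1) - u (p 2)), sq_nonneg (u (p 2) - u (p 0))]

/-- A resistance bound `5/3` inside a cell of level one scales to a bound `(5/3) r ≤ 1`. -/
theorem cell_bound {X : Type*} {p : Fin 3 → X} {G : Fin 3 → X → X} {m : ℕ} {r ρ : ℕ → ℝ}
    (h : IsMatching r ρ) (i : Fin 3) (u : X → ℝ) {d : ℝ}
    (hd : d ≤ (5 / 3) * energy p G m (fun k => r (k + 1)) (fun k => ρ (k + 1)) (u ∘ G i)) :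
    d ≤ 1 * energy p G (m + 1) r ρ u := by
  obtain ⟨h1, h2, h3⟩ := h 0
  have hs := Finset.single_le_sum
    (fun j _ => energy_nonneg p G m _ _ h.shift (u ∘ G j)) (Finset.mem_univ i)
  have hnn := energy_nonneg p G m _ _ h.shift (u ∘ G i)
  have hl := mul_nonneg (inv_nonneg.2 h2.le) (linkEnergy_nonneg p G u)
  have h53 : (5 / 3 : ℝ) ≤ (r 0)⁻¹ := by
    rw [le_inv_comm₀ (by norm_num) h1]; linarith
  have := mul_le_mul_of_nonneg_right h53 hnn
  have := mul_le_mul_of_nonneg_left hs (inv_nonneg.2 h1.le)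
  simp only [energy]
  linarith

theorem vertex_corner_bound {X : Type*} {p : Fin 3 → X} {G : Fin 3 → X → X}
    (hfix : ∀ i, G i (p i) = p i) (k : Fin 3) (w : List (Fin 3)) :
    ∀ (r ρ : ℕ → ℝ), IsMatching r ρ → ∀ (j : Fin 3) (u : X → ℝ),
      (u (w.foldr G (p k)) - u (p j)) ^ 2 ≤ (5 / 3) * energy p G w.length r ρ u := by
  induction w with
  | nil =>
    intro r ρ _ j u
    have := corner_bound p k j u
    have := triEnergy_nonneg p u
    simp only [List.foldr_nil, List.length_nil, energy]
    linarith
  | cons i w ih =>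
    intro r ρ h j u
    have := resistance_triangle (energy p G (w.length + 1) r ρ) (energy_nonneg p G _ r ρ h)
      (energy_cut p G _ r ρ h) (x := G i (w.foldr G (p k))) (y := p i) (z := p j)
      one_pos (by norm_num : (0 : ℝ) < 2 / 3)
      (fun v => cell_bound h i v (by simpa [hfix] using ih _ _ h.shift i (v ∘ G i)))
      (fun v => (corner_bound p i j v).trans
        (mul_le_mul_of_nonneg_left (tri_le_energy hfix _ r ρ h v) (by norm_num))) u
    norm_num at this
    simpa using this

theorem vertex_bound {X : Type*} {p : Fin 3 → X} {G : Fin 3 → X → X}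
    (hfix : ∀ i, G i (p i) = p i) {r ρ : ℕ → ℝ} (h : IsMatching r ρ) (k l : Fin 3)
    (v w : List (Fin 3)) (hvw : v.length = w.length) (u : X → ℝ) :
    (u (v.foldr G (p k)) - u (w.foldr G (p l))) ^ 2 ≤ 4 * energy p G w.length r ρ u := by
  have hnn := energy_nonneg p G w.length r ρ h u
  rcases v with _ | ⟨i, v⟩
  · obtain rfl := List.length_eq_zero_iff.1 hvw.symm
    have := vertex_corner_bound hfix k [] r ρ h l u
    simp only [List.foldr_nil] at this ⊢
    linarith
  · have := resistance_triangle (energy p G w.length r ρ) (energy_nonneg p G _ r ρ h)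
      (energy_cut p G _ r ρ h) (x := G i (v.foldr G (p k))) (y := p i) (z := w.foldr G (p l))
      one_pos (by norm_num : (0 : ℝ) < 5 / 3)
      (fun f => by
        rw [← hvw]
        exact cell_bound h i f
          (by simpa [hfix] using vertex_corner_bound hfix k v _ _ h.shift i (f ∘ G i)))
      (fun f => by
        rw [sub_sq_comm]
        exact vertex_corner_bound hfix l w r ρ h i f) u
    simp only [List.foldr_cons]
    linarith

/-! ### The closed formula for the energy -/

/-- A sum over words of length `m + 1`, split after the first letter. -/
theorem sum_words_succ {X : Type*} (G : Fin 3 → X → X) (F : (X → ℝ) → ℝ) (m : ℕ) (u : X → ℝ) :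
    ∑ w : Fin (m + 1) → Fin 3, F (u ∘ (List.ofFn w).foldr G) =
      ∑ i, ∑ w : Fin m → Fin 3, F ((u ∘ G i) ∘ (List.ofFn w).foldr G) := by
  rw [← Fintype.sum_prod_type', ← (Fin.consEquiv (fun _ : Fin (m + 1) => Fin 3)).sum_comp]
  refine Finset.sum_congr rfl fun q _ => ?_
  congr 1
  funext x
  simp [Fin.consEquiv, List.ofFn_succ]

theorem energy_eq {X : Type*} (p : Fin 3 → X) (G : Fin 3 → X → X) (m : ℕ) :
    ∀ (r ρ : ℕ → ℝ) (u : X → ℝ), energy p G m r ρ u =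
      (∏ i ∈ Finset.range m, r i)⁻¹ *
          ∑ w : Fin m → Fin 3, triEnergy p (u ∘ fun x => (List.ofFn w).foldr G x) +
        ∑ k ∈ Finset.range m, ((∏ i ∈ Finset.range k, r i) * ρ k)⁻¹ *
          ∑ w : Fin k → Fin 3, linkEnergy p G (u ∘ fun x => (List.ofFn w).foldr G x) := by
  induction m with
  | zero => intro r ρ u; simp [energy, Function.comp_def]
  | succ m ih =>
    intro r ρ u
    simp only [energy, ih]
    rw [Finset.sum_range_succ', Finset.prod_range_succ', sum_words_succ G (triEnergy p)]
    simp only [sum_words_succ G (linkEnergy p G), Finset.prod_range_succ', Finset.sum_add_distrib,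
      mul_add, ← Finset.mul_sum]
    rw [Finset.sum_comm (s := (Finset.univ : Finset (Fin 3))) (t := Finset.range m)]
    simp only [← Finset.mul_sum]
    rw [Finset.mul_sum (s := Finset.range m), mul_inv, add_assoc]
    congr 1
    · ring
    · congr 1
      · refine Finset.sum_congr rfl fun k _ => ?_
        simp only [mul_inv]
        ring
      · simp [Function.comp_def]


/-- For R = {(r_m,ρ_m)} ∈ MP^ℕ, every m ≥ 1, every u : V_m → ℝ and all
x, y ∈ V_m, one has `|u(x) − u(y)|² ≤ 4 E_{R,m}(u,u)`. -/
theorem resistance_diameter_bound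
    (p : Fin 3 → EuclideanSpace ℝ (Fin 2))
    (hp_sum : p 0 + p 1 + p 2 = 0)
    (hp_dist : ∀ i j : Fin 3, i ≠ j → dist (p i) (p j) = 1)
    (α : ℝ) (hα : α ∈ Set.Ioo (0 : ℝ) 1)
    (G : Fin 3 → EuclideanSpace ℝ (Fin 2) → EuclideanSpace ℝ (Fin 2))
    (hG : ∀ i x, G i x = ((1 - α) / 2) • (x - p i) + p i)
    (Gw : List (Fin 3) → EuclideanSpace ℝ (Fin 2) → EuclideanSpace ℝ (Fin 2))
    (hGw_nil : ∀ x, Gw [] x = x)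
    (hGw_cons : ∀ i w x, Gw (i :: w) x = G i (Gw w x))
    (Q0 : (EuclideanSpace ℝ (Fin 2) → ℝ) → ℝ)
    (hQ0 : ∀ u, Q0 u =
      (u (p 0) - u (p 1)) ^ 2 + (u (p 1) - u (p 2)) ^ 2 + (u (p 2) - u (p 0)) ^ 2)
    (Q1I : (EuclideanSpace ℝ (Fin 2) → ℝ) → ℝ)
    (hQ1I : ∀ u, Q1I u =
      (u (G 0 (p 1)) - u (G 1 (p 0))) ^ 2 + (u (G 1 (p 2)) - u (G 2 (p 1))) ^ 2 +
        (u (G 2 (p 0)) - u (G 0 (p 2))) ^ 2)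
    (QS QI : ℕ → (EuclideanSpace ℝ (Fin 2) → ℝ) → ℝ)
    (hQS : ∀ m u, QS m u = ∑ w : Fin m → Fin 3, Q0 (u ∘ Gw (List.ofFn w)))
    (hQI : ∀ m u, QI (m + 1) u = ∑ w : Fin m → Fin 3, Q1I (u ∘ Gw (List.ofFn w)))
    (V : ℕ → Set (EuclideanSpace ℝ (Fin 2)))
    (hV : ∀ m, V m = {x | ∃ (w : Fin m → Fin 3) (i : Fin 3), x = Gw (List.ofFn w) (p i)})
    -- the sequence of matching pairs, `r m` standing for `r_{m+1}` etc.
    (r ρ : ℕ → ℝ)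
    (hmatch : ∀ m, 0 < r m ∧ 0 < ρ m ∧ (5 / 3) * r m + ρ m = 1)
    (ER : ℕ → (EuclideanSpace ℝ (Fin 2) → ℝ) → ℝ)
    (hER : ∀ m u, ER m u = (∏ i ∈ Finset.range m, r i)⁻¹ * QS m u +
      ∑ k ∈ Finset.range m, ((∏ i ∈ Finset.range k, r i) * ρ k)⁻¹ * QI (k + 1) u) :
    ∀ m, 1 ≤ m → ∀ u : EuclideanSpace ℝ (Fin 2) → ℝ,
      ∀ x ∈ V m, ∀ y ∈ V m, |u x - u y| ^ 2 ≤ 4 * ER m u := by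
  have hGw : ∀ w x, Gw w x = w.foldr G x := by
    intro w
    induction w with
    | nil => exact hGw_nil
    | cons i w ih => intro x; rw [hGw_cons, ih]; rfl
  have hfix : ∀ i, G i (p i) = p i := fun i => by simp [hG]
  intro m _ u x hx y hy
  rw [hV] at hx hy
  obtain ⟨v, k, rfl⟩ := hx
  obtain ⟨w, l, rfl⟩ := hy
  have hE : ER m u = energy p G m r ρ u := by
    rw [hER, energy_eq]
    simp only [hQS, hQI]
    have h0 : Q0 = triEnergy p := funext hQ0
    have h1 : Q1I = linkEnergy p G := funext hQ1I
    have h2 : Gw = fun w x => w.foldr G x := by funext w x; exact hGw w x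
    rw [h0, h1, h2]
  rw [sq_abs, hE, hGw, hGw]
  have := vertex_bound hfix (r := r) (ρ := ρ) hmatch k l (List.ofFn v) (List.ofFn w) (by simp) u
  simpa only [List.length_ofFn] using this
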